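/- Let N ≥ 2 be an integer and ξ ∈ (0, 1/2), and define m : ℕ → ℝ by m(k) = √(k/N) if k ≥ N^{1−2ξ} and m(k) = ½( N^{−1+ξ} k + N^{−ξ} ) otherwise. Then for every k ∈ ℕ: |m(k) − m(k+1)| ≤ ½ N^{−1+ξ} and |m(k) − m(k+2)| ≤ N^{−1+ξ}; moreover there is a universal constant C such that |m(k) − 2 m(k+1) + m(k+2)| ≤ C N^{−2+3ξ} and |m(k) − m(k+1) − m(k+2) + m(k+3)| ≤ C N^{−2+3ξ}. -/

import Mathlib

/-- The weight function `m(k) = √(k/N)` for `k ≥ N^(1-2ξ)` and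
`m(k) = ½(N^(-1+ξ) k + N^(-ξ))` otherwise. -/
noncomputable def mWeight (N : ℕ) (ξ : ℝ) (k : ℕ) : ℝ :=
  if (N : ℝ) ^ (1 - 2 * ξ) ≤ (k : ℝ) then Real.sqrt ((k : ℝ) / N)
  else (1/2) * ((N : ℝ) ^ (-1 + ξ) * k + (N : ℝ) ^ (-ξ))

/-!
With `s = N ^ (-ξ)`, the weight is `m k = T (k / N)`, where `T` is `√` with its part left of `s ^ 2`
replaced by the tangent line at `s ^ 2`. Since `T x` is the minimum of the affine functions
`(x / c + c) / 2` over `c ≥ s`, `T` is concave, and the slope `1 / (2 c)` at the minimiser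
`c = √(max (s ^ 2) x)` is a supergradient. It is bounded by `1 / (2 s)` and Lipschitz with constant
`1 / (4 s ^ 3)`, which controls first and second differences of step `1 / N` without calculus and
without distinguishing on which side of `s ^ 2` the points lie.
-/

section Supergradient

variable {R : Type*} [CommRing R] [LinearOrder R] [IsStrictOrderedRing R] {f g : R → R}

/-- `g x` is a supergradient of `f` at every point `x`: the line through `(x, f x)` of slope `g x`
lies above the graph of `f`. -/
def IsSupergradient (f g : R → R) : Prop := ∀ x y, f y - f x ≤ g x * (y - x)

namespace IsSupergradient

lemma abs_sub_le (hfg : IsSupergradient f g) {M : R} (hM : ∀ x, |g x| ≤ M) (x y : R) :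
    |f x - f y| ≤ M * |x - y| := by
  have sub_le (x y : R) : f y - f x ≤ M * |y - x| :=
    calc f y - f x ≤ g x * (y - x) := hfg x y
      _ ≤ |g x| * |y - x| := (le_abs_self _).trans_eq (abs_mul _ _)
      _ ≤ M * |y - x| := by gcongr; exact hM x
  exact abs_sub_le_iff.2 ⟨sub_le y x, abs_sub_comm x y ▸ sub_le x y⟩

lemma abs_second_diff_le_sub_mul (hfg : IsSupergradient f g) (x h : R) :
    |f x - 2 * f (x + h) + f (x + 2 * h)| ≤ (g x - g (x + 2 * h)) * h := by
  have h₀₁ := hfg x (x + h)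
  have h₁₀ := hfg (x + h) x
  have h₁₂ := hfg (x + h) (x + 2 * h)
  have h₂₁ := hfg (x + 2 * h) (x + h)
  exact abs_le.2 ⟨by linarith, by linarith⟩

lemma abs_second_diff_le (hfg : IsSupergradient f g) {K : R}
    (hK : ∀ x y, |g x - g y| ≤ K * |x - y|) (x h : R) :
    |f x - 2 * f (x + h) + f (x + 2 * h)| ≤ 2 * K * h ^ 2 :=
  calc |f x - 2 * f (x + h) + f (x + 2 * h)|
      ≤ (g x - g (x + 2 * h)) * h := hfg.abs_second_diff_le_sub_mul x h
    _ ≤ |g x - g (x + 2 * h)| * |h| := (le_abs_self _).trans_eq (abs_mul _ _)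
    _ ≤ K * |x - (x + 2 * h)| * |h| := by gcongr; exact hK _ _
    _ = 2 * K * h ^ 2 := by
      rw [sub_add_cancel_left, abs_neg, abs_mul, abs_two, ← sq_abs h]
      ring

end IsSupergradient

end Supergradient

/-- The minimiser of `c ↦ (x / c + c) / 2` over `c ≥ s`, for `s > 0`. -/
noncomputable def cutoffSqrt (s x : ℝ) : ℝ := √(max (s ^ 2) x)

/-- The square root with its part left of `s ^ 2` replaced by the tangent line at `s ^ 2`, encoded
as the minimum of `(x / c + c) / 2` over `c ≥ s`. -/
noncomputable def tangentSqrt (s x : ℝ) : ℝ := (x / cutoffSqrt s x + cutoffSqrt s x) / 2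

section TangentSqrt

variable {s x : ℝ}

lemma sq_cutoffSqrt (s x : ℝ) : cutoffSqrt s x ^ 2 = max (s ^ 2) x :=
  Real.sq_sqrt (le_max_of_le_left (sq_nonneg s))

lemma le_cutoffSqrt (s x : ℝ) : s ≤ cutoffSqrt s x :=
  Real.le_sqrt_of_sq_le (le_max_left _ _)

lemma cutoffSqrt_pos (hs : 0 < s) (x : ℝ) : 0 < cutoffSqrt s x :=
  hs.trans_le (le_cutoffSqrt s x)

lemma cutoffSqrt_of_sq_le (hx : s ^ 2 ≤ x) : cutoffSqrt s x = √x := by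
  rw [cutoffSqrt, max_eq_right hx]

lemma cutoffSqrt_of_le_sq (hs : 0 ≤ s) (hx : x ≤ s ^ 2) : cutoffSqrt s x = s := by
  rw [cutoffSqrt, max_eq_left hx, Real.sqrt_sq hs]

lemma tangentSqrt_of_sq_le (hx : s ^ 2 ≤ x) : tangentSqrt s x = √x := by
  rw [tangentSqrt, cutoffSqrt_of_sq_le hx, Real.div_sqrt, add_self_div_two]

lemma tangentSqrt_of_le_sq (hs : 0 ≤ s) (hx : x ≤ s ^ 2) :
    tangentSqrt s x = (x / s + s) / 2 := by
  rw [tangentSqrt, cutoffSqrt_of_le_sq hs hx]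

lemma abs_cutoffSqrt_sub_le (hs : 0 < s) (x y : ℝ) :
    |cutoffSqrt s x - cutoffSqrt s y| ≤ |x - y| / (2 * s) := by
  have hx := le_cutoffSqrt s x
  have hy := le_cutoffSqrt s y
  rw [le_div_iff₀ (by positivity)]
  calc |cutoffSqrt s x - cutoffSqrt s y| * (2 * s)
      ≤ |cutoffSqrt s x - cutoffSqrt s y| * |cutoffSqrt s x + cutoffSqrt s y| := by
        gcongr
        exact le_abs.2 (.inl (by linarith))
    _ = |max x (s ^ 2) - max y (s ^ 2)| := by
        rw [← abs_mul, mul_comm, ← sq_sub_sq, sq_cutoffSqrt, sq_cutoffSqrt, max_comm x, max_comm y]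
    _ ≤ |x - y| := abs_max_sub_max_le_abs _ _ _

lemma abs_one_div_two_mul_cutoffSqrt_sub_le (hs : 0 < s) (x y : ℝ) :
    |1 / (2 * cutoffSqrt s x) - 1 / (2 * cutoffSqrt s y)| ≤ 1 / (4 * s ^ 3) * |x - y| := by
  have hx := cutoffSqrt_pos hs x
  have hy := cutoffSqrt_pos hs y
  calc |1 / (2 * cutoffSqrt s x) - 1 / (2 * cutoffSqrt s y)|
      = |cutoffSqrt s y - cutoffSqrt s x| / (2 * (cutoffSqrt s x * cutoffSqrt s y)) := by
        rw [← abs_of_pos (show 0 < 2 * (cutoffSqrt s x * cutoffSqrt s y) by positivity), ← abs_div]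
        congr 1
        field_simp
    _ ≤ |y - x| / (2 * s) / (2 * (s * s)) := by
        gcongr
        exacts [abs_cutoffSqrt_sub_le hs y x, le_cutoffSqrt s x, le_cutoffSqrt s y]
    _ = 1 / (4 * s ^ 3) * |x - y| := by
        rw [abs_sub_comm]
        field_simp
        norm_num

lemma tangentSqrt_le (hs : 0 < s) {c : ℝ} (hc : s ≤ c) (x : ℝ) :
    tangentSqrt s x ≤ (x / c + c) / 2 := by
  have hc₀ : 0 < c := hs.trans_le hc
  have hd₀ := cutoffSqrt_pos hs x
  have hd := sq_cutoffSqrt s x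
  rw [tangentSqrt]
  set d := cutoffSqrt s x with hd_def
  have gap : (x / c + c) - (x / d + d) = (c - d) * (c * d - x) / (c * d) := by
    field_simp
    ring
  have gap_nonneg : 0 ≤ (c - d) * (c * d - x) := by
    rcases le_total (s ^ 2) x with hx | hx
    · rw [max_eq_right hx] at hd
      rw [← hd, show (c - d) * (c * d - d ^ 2) = d * (c - d) ^ 2 by ring]
      positivity
    · rw [hd_def, cutoffSqrt_of_le_sq hs.le hx]
      exact mul_nonneg (sub_nonneg.2 hc) (by nlinarith)
  have := div_nonneg gap_nonneg (mul_pos hc₀ hd₀).le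
  linarith

lemma isSupergradient_tangentSqrt (hs : 0 < s) :
    IsSupergradient (tangentSqrt s) fun x => 1 / (2 * cutoffSqrt s x) := fun x y =>
  calc tangentSqrt s y - tangentSqrt s x
      ≤ (y / cutoffSqrt s x + cutoffSqrt s x) / 2 - tangentSqrt s x :=
        sub_le_sub_right (tangentSqrt_le hs (le_cutoffSqrt s x) y) _
    _ = 1 / (2 * cutoffSqrt s x) * (y - x) := by
        rw [tangentSqrt]
        ring

lemma abs_tangentSqrt_sub_le (hs : 0 < s) (x y : ℝ) :
    |tangentSqrt s x - tangentSqrt s y| ≤ 1 / (2 * s) * |x - y| := by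
  refine (isSupergradient_tangentSqrt hs).abs_sub_le (fun z => ?_) x y
  have hz := cutoffSqrt_pos hs z
  rw [abs_of_pos (by positivity)]
  gcongr
  exact le_cutoffSqrt s z

lemma abs_tangentSqrt_second_diff_le (hs : 0 < s) (x h : ℝ) :
    |tangentSqrt s x - 2 * tangentSqrt s (x + h) + tangentSqrt s (x + 2 * h)| ≤
      2 * (1 / (4 * s ^ 3)) * h ^ 2 :=
  (isSupergradient_tangentSqrt hs).abs_second_diff_le (abs_one_div_two_mul_cutoffSqrt_sub_le hs) x h

end TangentSqrt

section MWeight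

variable {N : ℕ}

lemma mWeight_eq_tangentSqrt (hN : 0 < N) (ξ : ℝ) (k : ℕ) :
    mWeight N ξ k = tangentSqrt ((N : ℝ) ^ (-ξ)) (k / N) := by
  have hN₀ : (0 : ℝ) < N := Nat.cast_pos.2 hN
  have threshold : (N : ℝ) ^ (1 - 2 * ξ) ≤ k ↔ ((N : ℝ) ^ (-ξ)) ^ 2 ≤ k / N := by
    rw [le_div_iff₀ hN₀, ← Real.rpow_mul_natCast hN₀.le, ← Real.rpow_add_one hN₀.ne']
    ring_nf
  rw [mWeight]
  split_ifs with hk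
  · rw [tangentSqrt_of_sq_le (threshold.1 hk)]
  · rw [tangentSqrt_of_le_sq (by positivity) (le_of_not_ge (threshold.not.1 hk)),
      Real.rpow_add hN₀, Real.rpow_neg_one, Real.rpow_neg hN₀.le, div_inv_eq_mul]
    ring

lemma abs_mWeight_sub_le (hN : 0 < N) (ξ : ℝ) (j k : ℕ) :
    |mWeight N ξ j - mWeight N ξ k| ≤ 1 / 2 * (N : ℝ) ^ (-1 + ξ) * |(j : ℝ) - k| := by
  have hN₀ : (0 : ℝ) < N := Nat.cast_pos.2 hN
  rw [mWeight_eq_tangentSqrt hN, mWeight_eq_tangentSqrt hN]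
  refine (abs_tangentSqrt_sub_le (Real.rpow_pos_of_pos hN₀ _) _ _).trans_eq ?_
  rw [← sub_div, abs_div, abs_of_pos hN₀, Real.rpow_add hN₀, Real.rpow_neg_one,
    Real.rpow_neg hN₀.le]
  field_simp

lemma abs_mWeight_second_diff_le (hN : 0 < N) (ξ : ℝ) (k : ℕ) :
    |mWeight N ξ k - 2 * mWeight N ξ (k + 1) + mWeight N ξ (k + 2)| ≤
      1 / 2 * (N : ℝ) ^ (-2 + 3 * ξ) := by
  have hN₀ : (0 : ℝ) < N := Nat.cast_pos.2 hN
  have cube : (N : ℝ) ^ (-2 + 3 * ξ) = (N ^ ξ) ^ 3 / N ^ 2 := by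
    rw [← Real.rpow_mul_natCast hN₀.le, ← Real.rpow_natCast, ← Real.rpow_sub hN₀]
    push_cast
    ring_nf
  have key := abs_tangentSqrt_second_diff_le (Real.rpow_pos_of_pos hN₀ (-ξ)) (k / N) (1 / N)
  simp only [mWeight_eq_tangentSqrt hN, Nat.cast_add, Nat.cast_one, Nat.cast_ofNat, add_div]
  rw [mul_one_div] at key
  refine key.trans_eq ?_
  rw [cube, Real.rpow_neg hN₀.le]
  field_simp
  norm_num

theorem mWeight_discrete_derivative_bounds_general (hN : 0 < N) (ξ : ℝ) :
    (∀ k : ℕ, |mWeight N ξ k - mWeight N ξ (k + 1)| ≤ 1 / 2 * (N : ℝ) ^ (-1 + ξ)) ∧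
    (∀ k : ℕ, |mWeight N ξ k - mWeight N ξ (k + 2)| ≤ (N : ℝ) ^ (-1 + ξ)) ∧
    (∀ k : ℕ, |mWeight N ξ k - 2 * mWeight N ξ (k + 1) + mWeight N ξ (k + 2)| ≤
      (N : ℝ) ^ (-2 + 3 * ξ)) ∧
    (∀ k : ℕ, |mWeight N ξ k - mWeight N ξ (k + 1) - mWeight N ξ (k + 2) + mWeight N ξ (k + 3)| ≤
      (N : ℝ) ^ (-2 + 3 * ξ)) := by
  refine ⟨fun k => ?_, fun k => ?_, fun k => ?_, fun k => ?_⟩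
  · simpa using abs_mWeight_sub_le hN ξ k (k + 1)
  · simpa [mul_comm] using abs_mWeight_sub_le hN ξ k (k + 2)
  · exact (abs_mWeight_second_diff_le hN ξ k).trans
      (mul_le_of_le_one_left (by positivity) (by norm_num))
  · calc |mWeight N ξ k - mWeight N ξ (k + 1) - mWeight N ξ (k + 2) + mWeight N ξ (k + 3)|
        = |(mWeight N ξ k - 2 * mWeight N ξ (k + 1) + mWeight N ξ (k + 2)) +
            (mWeight N ξ (k + 1) - 2 * mWeight N ξ (k + 2) + mWeight N ξ (k + 3))| := by ring_nf
      _ ≤ 1 / 2 * (N : ℝ) ^ (-2 + 3 * ξ) + 1 / 2 * (N : ℝ) ^ (-2 + 3 * ξ) :=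
        (abs_add_le _ _).trans (add_le_add (abs_mWeight_second_diff_le hN ξ k)
          (abs_mWeight_second_diff_le hN ξ (k + 1)))
      _ = (N : ℝ) ^ (-2 + 3 * ξ) := by ring

end MWeight

/-- Bounds on the discrete derivatives of the weight `m`: for all `k`,
`|m(k) - m(k+1)| ≤ ½ N^(-1+ξ)` and `|m(k) - m(k+2)| ≤ N^(-1+ξ)`, and there is a universal
constant `C` such that the second discrete derivatives are bounded by `C N^(-2+3ξ)`. -/
theorem mWeight_discrete_derivative_bounds :
    ∃ C > (0:ℝ), ∀ N : ℕ, 2 ≤ N → ∀ ξ : ℝ, ξ ∈ Set.Ioo (0:ℝ) (1/2) →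
      (∀ k : ℕ, |mWeight N ξ k - mWeight N ξ (k+1)| ≤ (1/2) * (N : ℝ) ^ (-1 + ξ)) ∧
      (∀ k : ℕ, |mWeight N ξ k - mWeight N ξ (k+2)| ≤ (N : ℝ) ^ (-1 + ξ)) ∧
      (∀ k : ℕ, |mWeight N ξ k - 2 * mWeight N ξ (k+1) + mWeight N ξ (k+2)| ≤
        C * (N : ℝ) ^ (-2 + 3 * ξ)) ∧
      (∀ k : ℕ, |mWeight N ξ k - mWeight N ξ (k+1) - mWeight N ξ (k+2) + mWeight N ξ (k+3)| ≤
        C * (N : ℝ) ^ (-2 + 3 * ξ)) := by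
  exact ⟨1, one_pos, fun N hN ξ _ => by
    simpa only [one_mul] using mWeight_discrete_derivative_bounds_general (by omega : 0 < N) ξ⟩
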